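/- arXiv:2604.08172 — 3 statements merged into one kernel-verified Lean document; each statement's English description precedes it below -/
import Mathlib

section
/- Suppose a matrix C* and vector b* are such that the structural residuals satisfy Σ_{i=1}^N Δs_i = 0 and Σ_{i=1}^N Δs_i · x_iᵀ = 0 (the 3×3 zero matrix). Then the cross-term between the photometric and structural residuals vanishes: Σ_{i=1}^N ⟨Δp_i, Δs_i⟩ = 0, where ⟨·,·⟩ is the Euclidean inner product on ℝ³. -/
open Finset Matrix

section

variable {ι m n R : Type*} [Fintype m] [Fintype n] [NonUnitalCommSemiring R]

lemma mulVec_dotProduct_eq_trace (A : Matrix m n R) (x : n → R) (s : m → R) :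
    A *ᵥ x ⬝ᵥ s = trace (Aᵀ * vecMulVec s x) := by
  rw [mul_vecMulVec, trace_vecMulVec, mulVec_transpose, ← dotProduct_mulVec, dotProduct_comm]

lemma sum_affine_dotProduct_eq (t : Finset ι) (A : Matrix m n R) (b : m → R)
    (x : ι → n → R) (s : ι → m → R) :
    ∑ i ∈ t, (A *ᵥ x i + b) ⬝ᵥ s i =
      trace (Aᵀ * ∑ i ∈ t, vecMulVec (s i) (x i)) + b ⬝ᵥ ∑ i ∈ t, s i := by
  simp only [add_dotProduct, mulVec_dotProduct_eq_trace, sum_add_distrib, Matrix.mul_sum,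
    trace_sum, dotProduct_sum]

theorem pal_cross_term_vanishes_general (t : Finset ι) (A : Matrix m n R) (b : m → R)
    (x : ι → n → R) (s : ι → m → R) (hs : ∑ i ∈ t, s i = 0)
    (hsx : ∑ i ∈ t, vecMulVec (s i) (x i) = 0) :
    ∑ i ∈ t, (A *ᵥ x i + b) ⬝ᵥ s i = 0 := by
  rw [sum_affine_dotProduct_eq, hs, hsx, Matrix.mul_zero, trace_zero, dotProduct_zero, add_zero]

end

/-- If the structural residuals `Δsᵢ = yᵢ − C*·xᵢ − b*` satisfy
`∑ i, Δsᵢ = 0` and `∑ i, Δsᵢ · xᵢᵀ = 0`, then the cross-term between the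
photometric residuals `Δpᵢ = (C* − I)·xᵢ + b*` and the structural residuals
vanishes: `∑ i, ⟨Δpᵢ, Δsᵢ⟩ = 0`. -/
theorem pal_cross_term_vanishes
    (N : ℕ) (hN : 0 < N)
    (x y : Fin N → Fin 3 → ℝ)
    (Cstar : Matrix (Fin 3) (Fin 3) ℝ) (bstar : Fin 3 → ℝ)
    (h1 : (∑ i, (y i - Cstar.mulVec (x i) - bstar)) = 0)
    (h2 : (∑ i, vecMulVec (y i - Cstar.mulVec (x i) - bstar) (x i)) = 0) :
    (∑ i, ∑ j, ((Cstar - 1).mulVec (x i) + bstar) j *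
      (y i - Cstar.mulVec (x i) - bstar) j) = 0 :=
  pal_cross_term_vanishes_general univ (Cstar - 1) bstar x _ h1 h2
end

section
/- If (C*, b*) is a global minimizer of the alignment objective J over all real 3×3 matrices C and vectors b ∈ ℝ³, then the total gradient energy of the mean-squared-error loss splits exactly into a photometric and a structural budget: Σ_{i=1}^N ‖(2/N)·(Δp_i + Δs_i)‖² = (4/N²)·Σ_{i=1}^N ‖Δp_i‖² + (4/N²)·Σ_{i=1}^N ‖Δs_i‖². -/
open Finset Matrix

/-!
The corrected images `(C xᵢ + b)ᵢ` form a linear subspace of the space of images, and this subspace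
contains `x` itself, as the case `C = 1`, `b = 0`. A minimizer `(C*, b*)` makes `(C* xᵢ + b*)ᵢ` an
orthogonal projection of `y` onto the subspace, so `Δs = y - (C* xᵢ + b*)ᵢ` is orthogonal to
`Δp = (C* xᵢ + b*)ᵢ - x`, and the splitting is the Pythagorean identity for `Δp + Δs`. Moving
`(C*, b*)` in the direction `(C* - 1, b*)` moves the corrected image along `Δp`, so orthogonality
can be read off the discriminant of the quadratic polynomial that `J` is on that line.
-/

section Orthogonality

variable {κ K : Type*} {S : Finset κ} {p s : κ → K}

theorem sum_add_sq_of_sum_mul_eq_zero [CommSemiring K] (h : ∑ k ∈ S, p k * s k = 0) :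
    ∑ k ∈ S, (p k + s k) ^ 2 = ∑ k ∈ S, p k ^ 2 + ∑ k ∈ S, s k ^ 2 := by
  simp only [add_sq, sum_add_distrib, mul_assoc, ← mul_sum, h, mul_zero, add_zero]

theorem sum_sub_mul_sq [CommRing K] (t : K) :
    ∑ k ∈ S, (s k - t * p k) ^ 2 =
      (∑ k ∈ S, p k ^ 2) * (t * t) + -2 * (∑ k ∈ S, p k * s k) * t + ∑ k ∈ S, s k ^ 2 := by
  simp only [mul_sum, sum_mul, ← sum_add_distrib]
  exact sum_congr rfl fun k _ => by ring

theorem sum_mul_eq_zero_of_forall_sum_sq_le [Field K] [LinearOrder K] [IsStrictOrderedRing K]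
    (h : ∀ t : K, ∑ k ∈ S, s k ^ 2 ≤ ∑ k ∈ S, (s k - t * p k) ^ 2) :
    ∑ k ∈ S, p k * s k = 0 := by
  have nonneg (t : K) :
      0 ≤ (∑ k ∈ S, p k ^ 2) * (t * t) + -2 * (∑ k ∈ S, p k * s k) * t + 0 := by
    linarith [h t, sum_sub_mul_sq (S := S) (p := p) (s := s) t]
  have discrim_nonpos := discrim_le_zero nonneg
  rw [discrim] at discrim_nonpos
  exact pow_eq_zero_iff two_ne_zero |>.mp <| le_antisymm (by linarith) (sq_nonneg _)

end Orthogonality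

section Alignment

variable {ι n K : Type*} [Fintype n]

/-- The photometric residual `Δp` of the affine color correction `(C, b)`: the change that the
correction makes to the image `x`. -/
def photometricResidual [DecidableEq n] [Ring K] (x : ι → n → K) (C : Matrix n n K) (b : n → K) :
    ι → n → K :=
  fun i => (C - 1) *ᵥ x i + b

/-- The structural residual `Δs` of the affine color correction `(C, b)`: the part of the target
`y` that the corrected image misses. -/
def structuralResidual [Ring K] (x y : ι → n → K) (C : Matrix n n K) (b : n → K) : ι → n → K :=
  fun i => y i - C *ᵥ x i - b

/-- The least-squares alignment objective `J(C, b)`, with the squared Euclidean norms written out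
as sums over color channels since `n → K` does not carry the Euclidean norm. -/
def alignmentObjective [Fintype ι] [Ring K] (x y : ι → n → K) (C : Matrix n n K) (b : n → K) : K :=
  ∑ i, ∑ j, (C *ᵥ x i + b - y i) j ^ 2

variable [Fintype ι] [DecidableEq n]

theorem alignmentObjective_add_smul [CommRing K] (x y : ι → n → K) (C : Matrix n n K) (b : n → K)
    (t : K) :
    alignmentObjective x y (C + t • (C - 1)) (b + t • b) =
      ∑ i, ∑ j, (structuralResidual x y C b i j - t * photometricResidual x C b i j) ^ 2 := by
  refine sum_congr rfl fun i _ => sum_congr rfl fun j _ => ?_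
  simp only [structuralResidual, photometricResidual, add_mulVec, smul_mulVec, Pi.add_apply,
    Pi.sub_apply, Pi.smul_apply, smul_eq_mul]
  ring

variable [Field K] [LinearOrder K] [IsStrictOrderedRing K] {x y : ι → n → K} {C : Matrix n n K}
  {b : n → K}

theorem sum_photometricResidual_mul_structuralResidual_eq_zero
    (hmin : ∀ C' b', alignmentObjective x y C b ≤ alignmentObjective x y C' b') :
    ∑ k : ι × n, photometricResidual x C b k.1 k.2 * structuralResidual x y C b k.1 k.2 = 0 := by
  refine sum_mul_eq_zero_of_forall_sum_sq_le fun t => ?_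
  have objective_eq := alignmentObjective_add_smul x y C b 0
  simp only [zero_smul, add_zero, zero_mul, sub_zero] at objective_eq
  simpa only [objective_eq, alignmentObjective_add_smul, ← Fintype.sum_prod_type']
    using hmin (C + t • (C - 1)) (b + t • b)

theorem pal_gradient_energy_split_general
    (hmin : ∀ C' b', alignmentObjective x y C b ≤ alignmentObjective x y C' b') (c : K) :
    ∑ i, ∑ j, (c * (photometricResidual x C b i j + structuralResidual x y C b i j)) ^ 2 =
      c ^ 2 * ∑ i, ∑ j, photometricResidual x C b i j ^ 2 +
        c ^ 2 * ∑ i, ∑ j, structuralResidual x y C b i j ^ 2 := by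
  simp only [mul_pow, ← mul_sum, ← mul_add, ← Fintype.sum_prod_type']
  rw [sum_add_sq_of_sum_mul_eq_zero (sum_photometricResidual_mul_structuralResidual_eq_zero hmin)]

end Alignment

/-- If `(C*, b*)` globally minimizes the alignment objective
`J(C, b) = ∑ i, ‖C·xᵢ + b − yᵢ‖²`, then the total gradient energy of the MSE
loss splits exactly into a photometric and a structural budget:
`∑ i, ‖(2/N)·(Δpᵢ + Δsᵢ)‖² = (4/N²)·∑ i, ‖Δpᵢ‖² + (4/N²)·∑ i, ‖Δsᵢ‖²`. -/
theorem pal_gradient_energy_split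
    (N : ℕ) (hN : 0 < N)
    (x y : Fin N → Fin 3 → ℝ)
    (Cstar : Matrix (Fin 3) (Fin 3) ℝ) (bstar : Fin 3 → ℝ)
    (hmin : ∀ (C : Matrix (Fin 3) (Fin 3) ℝ) (b : Fin 3 → ℝ),
      (∑ i, ∑ j, ((Cstar.mulVec (x i) + bstar - y i) j) ^ 2) ≤
      (∑ i, ∑ j, ((C.mulVec (x i) + b - y i) j) ^ 2)) :
    (∑ i, ∑ j, ((2 / (N : ℝ)) *
        (((Cstar - 1).mulVec (x i) + bstar) j +
         (y i - Cstar.mulVec (x i) - bstar) j)) ^ 2) =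
      (4 / (N : ℝ) ^ 2) *
        (∑ i, ∑ j, (((Cstar - 1).mulVec (x i) + bstar) j) ^ 2) +
      (4 / (N : ℝ) ^ 2) *
        (∑ i, ∑ j, ((y i - Cstar.mulVec (x i) - bstar) j) ^ 2) := by
  rw [show 4 / (N : ℝ) ^ 2 = (2 / (N : ℝ)) ^ 2 by ring]
  exact pal_gradient_energy_split_general hmin (2 / (N : ℝ))
end

section
/- (Loss decomposition under ridge regularization.) Fix λ > 0 and suppose (C*, b*) is a global minimizer of the ridge objective J_λ(C, b) = Σ_{i=1}^N ‖C·x_i + b − y_i‖² + λ·‖C‖_F². Then the pixel-wise squared error decomposes as Σ_{i=1}^N ‖y_i − x_i‖² = Σ_{i=1}^N ‖Δp_i‖² + Σ_{i=1}^N ‖Δs_i‖² + 2·λ·(‖C*‖_F² − tr(C*)); in particular, the cross-term is of order λ and vanishes continuously as λ → 0. -/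
open Finset Matrix

/-!
At a minimizer the derivative of the ridge objective vanishes in every direction `(D, d)`. In the
direction `(C* - 1, b*)` the model `(C, b) ↦ C xᵢ + b` changes by the photometric residual, so
`∑ ⟪Δsᵢ, Δpᵢ⟫ = λ ⟪C*, C* - 1⟫ = λ (‖C*‖² - tr C*)`. This is half the cross term obtained by
expanding `‖yᵢ - xᵢ‖² = ‖Δpᵢ + Δsᵢ‖²`.
-/

section Sums

variable {R m n : Type*} [CommRing R] [Fintype m] [Fintype n]

theorem sum_sum_add_mul_sq (f g : m → n → R) (t : R) :
    ∑ i, ∑ j, (f i j + t * g i j) ^ 2 =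
      ∑ i, ∑ j, f i j ^ 2 + 2 * t * ∑ i, ∑ j, f i j * g i j + t ^ 2 * ∑ i, ∑ j, g i j ^ 2 := by
  simp only [mul_sum, ← sum_add_distrib]
  refine sum_congr rfl fun i _ => sum_congr rfl fun j _ => ?_
  ring

theorem sum_sum_mul_sub_one [DecidableEq n] (C : Matrix n n R) :
    ∑ k, ∑ l, C k l * (C - 1) k l = ∑ k, ∑ l, C k l ^ 2 - trace C := by
  simp only [Matrix.sub_apply, one_apply, mul_sub, ← sq, mul_ite, mul_one, mul_zero,
    sum_sub_distrib, sum_ite_eq, mem_univ, if_true, trace, diag_apply]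

end Sums

theorem linear_coeff_eq_zero_of_forall_nonneg {K : Type*} [Field K] [LinearOrder K]
    [IsStrictOrderedRing K] {a b : K} (h : ∀ t, 0 ≤ t * b + t ^ 2 * a) : b = 0 := by
  have hdiscrim : discrim a b 0 ≤ 0 := discrim_le_zero fun t => by linarith [h t]
  exact sq_nonpos_iff b |>.mp (by simpa only [discrim, mul_zero, sub_zero] using hdiscrim)

section Ridge

variable {R ι m n : Type*} [CommRing R] [Fintype ι] [Fintype m] [Fintype n]

/-- The ridge objective `∑ᵢ ‖C xᵢ + b - yᵢ‖² + lam ‖C‖²`, with Euclidean and Frobenius norms written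
out in coordinates; the offset `b` is not penalized. -/
def ridgeObjective (lam : R) (x : ι → n → R) (y : ι → m → R) (C : Matrix m n R)
    (b : m → R) : R :=
  (∑ i, ∑ j, ((C.mulVec (x i) + b - y i) j) ^ 2) + lam * ∑ k, ∑ l, (C k l) ^ 2

/-- The first variation of `ridgeObjective lam x y` at `(C, b)` in the direction `(D, d)`,
defined by its explicit formula so that it makes sense over any commutative ring. -/
def ridgeFirstVariation (lam : R) (x : ι → n → R) (y : ι → m → R) (C : Matrix m n R) (b : m → R)
    (D : Matrix m n R) (d : m → R) : R :=
  2 * ((∑ i, ∑ j, (C.mulVec (x i) + b - y i) j * (D.mulVec (x i) + d) j) +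
    lam * ∑ k, ∑ l, C k l * D k l)

theorem ridgeObjective_add_smul (lam : R) (x : ι → n → R) (y : ι → m → R) (C D : Matrix m n R)
    (b d : m → R) (t : R) :
    ridgeObjective lam x y (C + t • D) (b + t • d) =
      ridgeObjective lam x y C b + t * ridgeFirstVariation lam x y C b D d +
        t ^ 2 * ridgeObjective lam x 0 D d := by
  have hresidual (i : ι) (j : m) : ((C + t • D).mulVec (x i) + (b + t • d) - y i) j =
      (C.mulVec (x i) + b - y i) j + t * (D.mulVec (x i) + d) j := by
    simp only [add_mulVec, smul_mulVec, Pi.add_apply, Pi.sub_apply, Pi.smul_apply, smul_eq_mul]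
    ring
  have hpenalty : ∑ k, ∑ l, (C + t • D) k l ^ 2 = _ := sum_sum_add_mul_sq C D t
  simp only [ridgeObjective, ridgeFirstVariation, hresidual, sum_sum_add_mul_sq, hpenalty,
    Pi.zero_apply, sub_zero]
  ring

theorem sum_sq_sub_eq_sub_ridgeFirstVariation [DecidableEq n] (lam : R) (x y : ι → n → R)
    (C : Matrix n n R) (b : n → R) :
    ∑ i, ∑ j, ((y i - x i) j) ^ 2 =
      (∑ i, ∑ j, (((C - 1).mulVec (x i) + b) j) ^ 2) +
      (∑ i, ∑ j, ((y i - C.mulVec (x i) - b) j) ^ 2) +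
      2 * lam * ((∑ k, ∑ l, (C k l) ^ 2) - trace C) -
      ridgeFirstVariation lam x y C b (C - 1) b := by
  have herror (i : ι) (j : n) :
      (y i - x i) j = (y i - C.mulVec (x i) - b) j + 1 * ((C - 1).mulVec (x i) + b) j := by
    simp only [sub_mulVec, one_mulVec, Pi.add_apply, Pi.sub_apply]
    ring
  have hresidual (i : ι) : C.mulVec (x i) + b - y i = -(y i - C.mulVec (x i) - b) := by abel
  simp only [herror, sum_sum_add_mul_sq, ridgeFirstVariation, sum_sum_mul_sub_one, hresidual,
    Pi.neg_apply, neg_mul, sum_neg_distrib]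
  ring

end Ridge

section Minimizer

variable {K ι m n : Type*} [Field K] [LinearOrder K] [IsStrictOrderedRing K]
  [Fintype ι] [Fintype m] [Fintype n]

theorem ridgeFirstVariation_eq_zero_of_forall_le {lam : K} {x : ι → n → K} {y : ι → m → K}
    {C : Matrix m n K} {b : m → K}
    (hmin : ∀ C' b', ridgeObjective lam x y C b ≤ ridgeObjective lam x y C' b')
    (D : Matrix m n K) (d : m → K) : ridgeFirstVariation lam x y C b D d = 0 := by
  refine linear_coeff_eq_zero_of_forall_nonneg (a := ridgeObjective lam x 0 D d) fun t => ?_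
  have hle := hmin (C + t • D) (b + t • d)
  rw [ridgeObjective_add_smul] at hle
  linarith

theorem pal_ridge_loss_decomposition_general [DecidableEq n] {lam : K} {x y : ι → n → K}
    {C : Matrix n n K} {b : n → K}
    (hmin : ∀ C' b', ridgeObjective lam x y C b ≤ ridgeObjective lam x y C' b') :
    (∑ i, ∑ j, ((y i - x i) j) ^ 2) =
      (∑ i, ∑ j, (((C - 1).mulVec (x i) + b) j) ^ 2) +
      (∑ i, ∑ j, ((y i - C.mulVec (x i) - b) j) ^ 2) +
      2 * lam * ((∑ k, ∑ l, (C k l) ^ 2) - trace C) := by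
  rw [sum_sq_sub_eq_sub_ridgeFirstVariation lam x y C b,
    ridgeFirstVariation_eq_zero_of_forall_le hmin, sub_zero]

end Minimizer

/-- Loss decomposition under ridge regularization. If `(C*, b*)` globally
minimizes the ridge objective `J_λ(C, b) = ∑ i, ‖C·xᵢ + b − yᵢ‖² + λ·‖C‖_F²`
for `λ > 0`, then the pixel-wise squared error decomposes as
`∑ i, ‖yᵢ − xᵢ‖² = ∑ i, ‖Δpᵢ‖² + ∑ i, ‖Δsᵢ‖² + 2λ·(‖C*‖_F² − tr(C*))`. -/
theorem pal_ridge_loss_decomposition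
    (N : ℕ) (hN : 0 < N)
    (x y : Fin N → Fin 3 → ℝ)
    (lam : ℝ) (hlam : 0 < lam)
    (Cstar : Matrix (Fin 3) (Fin 3) ℝ) (bstar : Fin 3 → ℝ)
    (hmin : ∀ (C : Matrix (Fin 3) (Fin 3) ℝ) (b : Fin 3 → ℝ),
      ((∑ i, ∑ j, ((Cstar.mulVec (x i) + bstar - y i) j) ^ 2) +
        lam * ∑ k, ∑ l, (Cstar k l) ^ 2) ≤
      ((∑ i, ∑ j, ((C.mulVec (x i) + b - y i) j) ^ 2) +
        lam * ∑ k, ∑ l, (C k l) ^ 2)) :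
    (∑ i, ∑ j, ((y i - x i) j) ^ 2) =
      (∑ i, ∑ j, (((Cstar - 1).mulVec (x i) + bstar) j) ^ 2) +
      (∑ i, ∑ j, ((y i - Cstar.mulVec (x i) - bstar) j) ^ 2) +
      2 * lam * ((∑ k, ∑ l, (Cstar k l) ^ 2) - Matrix.trace Cstar) :=
  pal_ridge_loss_decomposition_general hmin
end
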